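/- Let Ω = ⋃_{0<x≤1/2} B(x, x/√2) ∪ ⋃_{1/2<x<1} B(x, (1−x)/√2) ⊂ ℂ. For every function f holomorphic on Ω, ∑_{n=0}^∞ (2^n/(2n+1)!) ∫_0^{1/2} x^{2n+1} (|f^{(n)}(x)|² + |f^{(n)}(1−x)|²) dx ≤ 2 ∫_Ω |f(z)|² dA(z), where f^{(n)} denotes the n-th complex derivative of f. In particular, for f holomorphic on the open square D = {z ∈ ℂ : 0 < Re z < 1 and |Im z| < min(Re z, 1 − Re z)}, which contains Ω, the left-hand side is at most 2 ∫_D |f(z)|² dA(z). -/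

import Mathlib

open MeasureTheory Set Metric
open scoped ENNReal NNReal

/-- The domain `Ω = ⋃_{0<x≤1/2} B(x, x/√2) ∪ ⋃_{1/2<x<1} B(x, (1-x)/√2)`. -/
def Omega : Set ℂ :=
  (⋃ x ∈ Ioc (0 : ℝ) (1 / 2), ball (x : ℂ) (x / Real.sqrt 2)) ∪
    ⋃ x ∈ Ioo (1 / 2 : ℝ) 1, ball (x : ℂ) ((1 - x) / Real.sqrt 2)

/-- The open square `D` with vertices `0`, `1/2 + i/2`, `1`, `1/2 - i/2`. -/
def SquareD : Set ℂ := {z : ℂ | 0 < z.re ∧ z.re < 1 ∧ |z.im| < min z.re (1 - z.re)}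

lemma polar_lintegral (F : ℂ → ℝ≥0∞) (hF : Measurable F) (c : ℂ) :
    ∫⁻ z, F z = ∫⁻ r in Ioi (0:ℝ), ENNReal.ofReal r *
      ∫⁻ t in Ioo (-Real.pi) Real.pi, F (circleMap c r t) := by
  have hcm : Measurable fun p : ℝ × ℝ => F (circleMap c p.1 p.2) := by
    apply hF.comp
    unfold circleMap
    fun_prop
  rw [← lintegral_add_left_eq_self F c, ← Complex.lintegral_comp_polarCoord_symm]
  have : polarCoord.target = Ioi (0:ℝ) ×ˢ Ioo (-Real.pi) Real.pi := rfl
  rw [this, Measure.volume_eq_prod, ← Measure.prod_restrict]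
  have h2 : ∀ p : ℝ × ℝ, ENNReal.ofReal p.1 • F (c + Complex.polarCoord.symm p)
      = ENNReal.ofReal p.1 * F (circleMap c p.1 p.2) := by
    intro p
    rw [Complex.polarCoord_symm_apply, circleMap, Complex.exp_mul_I]
    simp
  simp_rw [h2]
  rw [lintegral_prod _ (by fun_prop)]
  refine lintegral_congr fun r => ?_
  have hc2 : Measurable fun t : ℝ => F (circleMap c r t) := hcm.comp measurable_prodMk_left
  dsimp only
  rw [lintegral_const_mul (ENNReal.ofReal r) hc2]

lemma sin_int (n : ℕ) : ∫ t in (0:ℝ)..(Real.pi/2), Real.sin t ^ (2*n+1)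
    = 4^n * (n.factorial:ℝ)^2 / ((2*n+1).factorial : ℝ) := by
  induction n with
  | zero => simp
  | succ k ih =>
    have : 2 * (k+1) + 1 = (2*k+1) + 2 := by ring
    rw [this, integral_sin_pow, ih]
    rw [Nat.factorial_succ (2*k+1+1), Nat.factorial_succ (2*k+1), Nat.factorial_succ k]
    have := Nat.factorial_ne_zero (2*k+1)
    simp
    field_simp
    ring

lemma sin_lint (n : ℕ) : ∫⁻ t in Ioo (0:ℝ) (Real.pi/2), ENNReal.ofReal (Real.sin t ^ (2*n+1))
    = ENNReal.ofReal (4^n * (n.factorial:ℝ)^2 / ((2*n+1).factorial : ℝ)) := by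
  rw [← sin_int, intervalIntegral.integral_of_le (by positivity), restrict_Ioo_eq_restrict_Ioc,
    ofReal_integral_eq_lintegral_ofReal]
  · exact (Continuous.intervalIntegrable (by fun_prop) _ _).1
  · filter_upwards [ae_restrict_mem measurableSet_Ioc] with t ht
    exact pow_nonneg (Real.sin_nonneg_of_nonneg_of_le_pi ht.1.le (by linarith [ht.2, Real.pi_pos])) _

lemma radial (x : ℝ) (hx : 0 < x) (n : ℕ) :
    ENNReal.ofReal ((2:ℝ)^n * (n.factorial:ℝ)^2 / ((2*n+1).factorial : ℝ) * x^(2*n+1)) ≤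
    ∫⁻ r in Ioo 0 (x / √2), ENNReal.ofReal r * (ENNReal.ofReal ((Real.pi * √(x^2-2*r^2))⁻¹) *
       ENNReal.ofReal (2 * Real.pi * r^(2*n))) := by
  have hs : (0:ℝ) < √2 := by positivity
  have hs2 : √2 ^ 2 = (2:ℝ) := Real.sq_sqrt (by norm_num)
  have hsub : (fun t => x / √2 * Real.sin t) '' Ioo 0 (Real.pi/2) ⊆ Ioo 0 (x/√2) := by
    rintro _ ⟨t, ht, rfl⟩
    have h1 := Real.sin_pos_of_pos_of_lt_pi ht.1 (by linarith [ht.2, Real.pi_pos])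
    have h2 : Real.sin t < 1 := by
      rw [← Real.sin_pi_div_two]
      exact Real.sin_lt_sin_of_lt_of_le_pi_div_two (by linarith [ht.1, Real.pi_pos]) le_rfl ht.2
    have : 0 < x / √2 := by positivity
    exact ⟨by positivity, by simpa using mul_lt_mul_of_pos_left h2 this⟩
  refine le_trans ?_ (lintegral_mono_set hsub)
  rw [lintegral_image_eq_lintegral_abs_deriv_mul (f' := fun t => x / √2 * Real.cos t) measurableSet_Ioo
    (fun t _ => ((Real.hasDerivAt_sin t).const_mul _).hasDerivWithinAt)]
  · have : ∀ t ∈ Ioo 0 (Real.pi/2), ENNReal.ofReal (x^(2*n+1) / 2^n) * ENNReal.ofReal (Real.sin t ^ (2*n+1)) =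
      ENNReal.ofReal |x / √2 * Real.cos t| * (ENNReal.ofReal (x / √2 * Real.sin t) *
        (ENNReal.ofReal ((Real.pi * √(x^2-2*(x / √2 * Real.sin t)^2))⁻¹) *
       ENNReal.ofReal (2 * Real.pi * (x / √2 * Real.sin t)^(2*n)))) := by
      intro t ht
      have h1 := Real.sin_pos_of_pos_of_lt_pi ht.1 (by linarith [ht.2, Real.pi_pos])
      have h2 := Real.cos_pos_of_mem_Ioo (x := t) ⟨by linarith [ht.1, Real.pi_pos], ht.2⟩
      have h3 : √(x^2-2*(x / √2 * Real.sin t)^2) = x * Real.cos t := by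
        rw [Real.sqrt_eq_iff_mul_self_eq_of_pos (by positivity), ← pow_two]
        rw [mul_pow, mul_pow, div_pow, hs2, Real.cos_sq']; ring
      have hp := Real.pi_pos
      rw [h3, abs_of_pos (by positivity), ← ENNReal.ofReal_mul (by positivity), ← ENNReal.ofReal_mul (by positivity),
        ← ENNReal.ofReal_mul (by positivity), ← ENNReal.ofReal_mul (by positivity)]
      congr 1
      have h4 : (x / √2 * Real.sin t)^(2*n) = x^(2*n) / 2^n * Real.sin t^(2*n) := by
        rw [mul_pow, div_pow, pow_mul √2, hs2]
      rw [h4]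
      field_simp
      rw [hs2]; ring
    rw [← setLIntegral_congr_fun measurableSet_Ioo this, lintegral_const_mul _ (by fun_prop), sin_lint, ← ENNReal.ofReal_mul (by positivity)]
    apply ENNReal.ofReal_le_ofReal
    apply le_of_eq
    have : (4:ℝ)^n = 2^n * 2^n := by rw [← mul_pow]; norm_num
    rw [this]
    field_simp
  · intro a ha b hb h
    have : x / √2 ≠ 0 := by positivity
    have h' := mul_left_cancel₀ this h
    exact Real.injOn_sin ⟨by linarith [ha.1, Real.pi_pos], ha.2.le⟩ ⟨by linarith [hb.1, Real.pi_pos], hb.2.le⟩ h'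

lemma xint (z : ℂ) : ∫⁻ x in Ioo (0:ℝ) (1/2), ENNReal.ofReal ((Real.pi * √(x^2-2*‖z - x‖^2))⁻¹) ≤ 1 := by
  have hq : ∀ x : ℝ, x^2-2*‖z - x‖^2 = (2*z.re^2 - 2*z.im^2) - (x - 2*z.re)^2 := by
    intro x
    rw [Complex.sq_norm, Complex.normSq_apply]; simp; ring
  simp_rw [hq]
  refine (setLIntegral_le_lintegral _ _).trans ?_
  set a := z.re
  set q := 2 * a^2 - 2 * z.im^2
  by_cases hp : q ≤ 0
  · have : ∀ x : ℝ, ENNReal.ofReal ((Real.pi * √(q - (x-2*a)^2))⁻¹) = 0 := by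
      intro x
      rw [Real.sqrt_eq_zero_of_nonpos (by nlinarith [sq_nonneg (x-2*a)])]; simp
    simp only [this, lintegral_zero, zero_le]
  push Not at hp
  set R := √q
  have hR : 0 < R := Real.sqrt_pos.2 hp
  have hR2 : R^2 = q := Real.sq_sqrt hp.le
  have hsup : Function.support (fun x : ℝ => ENNReal.ofReal ((Real.pi * √(q - (x-2*a)^2))⁻¹)) ⊆
      (fun t => 2*a + R * Real.sin t) '' Ioo (-(Real.pi/2)) (Real.pi/2) := by
    intro x hx
    have h1 : 0 < q - (x-2*a)^2 := by
      by_contra h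
      apply hx
      simp [Real.sqrt_eq_zero_of_nonpos (not_lt.1 h)]
    rw [← hR2] at h1
    have h2 := abs_lt_of_sq_lt_sq (by linarith : (x-2*a)^2 < R^2) hR.le
    rw [abs_lt] at h2
    refine ⟨Real.arcsin ((x-2*a)/R), ⟨?_, ?_⟩, ?_⟩
    · rw [Real.neg_pi_div_two_lt_arcsin, lt_div_iff₀ hR]; linarith
    · rw [Real.arcsin_lt_pi_div_two, div_lt_iff₀ hR]; linarith
    · simp only
      rw [Real.sin_arcsin]
      · field_simp; ring
      · rw [le_div_iff₀ hR]; linarith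
      · rw [div_le_iff₀ hR]; linarith
  rw [← setLIntegral_eq_of_support_subset hsup, lintegral_image_eq_lintegral_abs_deriv_mul (f' := fun t => R * Real.cos t) measurableSet_Ioo
    (fun t _ => (((Real.hasDerivAt_sin t).const_mul _).const_add _).hasDerivWithinAt)]
  · have : ∀ t ∈ Ioo (-(Real.pi/2)) (Real.pi/2), ENNReal.ofReal |R * Real.cos t| * 
        ENNReal.ofReal ((Real.pi * √(q - (2*a + R * Real.sin t - 2*a)^2))⁻¹) = ENNReal.ofReal (Real.pi⁻¹) := by
      intro t ht
      have h2 := Real.cos_pos_of_mem_Ioo ht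
      have h3 : √(q - (2*a + R * Real.sin t - 2*a)^2) = R * Real.cos t := by
        rw [Real.sqrt_eq_iff_mul_self_eq_of_pos (by positivity), ← pow_two]
        rw [mul_pow, Real.cos_sq', ← hR2]; ring
      have hp := Real.pi_pos
      rw [h3, abs_of_pos (by positivity), ← ENNReal.ofReal_mul (by positivity)]
      congr 1
      field_simp
    rw [setLIntegral_congr_fun measurableSet_Ioo this, setLIntegral_const, Real.volume_Ioo, ← ENNReal.ofReal_mul (by positivity)]
    rw [ENNReal.ofReal_le_one]
    have hp := Real.pi_pos
    apply le_of_eq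
    field_simp
    ring
  · intro s hs t ht h
    have h' := mul_left_cancel₀ hR.ne' (add_left_cancel h)
    exact Real.injOn_sin ⟨hs.1.le, hs.2.le⟩ ⟨ht.1.le, ht.2.le⟩ h'

lemma coeff (f : ℂ → ℂ) (c : ℂ) (r : ℝ) (hr : 0 < r) (hf : DifferentiableOn ℂ f (closedBall c r))
    (n : ℕ) (h : (0:ℝ) < 2 * Real.pi) :
    fourierCoeffOn h (fun t => f (circleMap c r t)) n = (r^n / n.factorial) * iteratedDeriv n f c := by
  have hC := DifferentiableOn.circleIntegral_one_div_sub_center_pow_smul hr n hf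
  have hp : (Real.pi : ℂ) ≠ 0 := by exact_mod_cast Real.pi_ne_zero
  have hr' : (r : ℂ) ≠ 0 := by exact_mod_cast hr.ne'
  have hfac : (n.factorial : ℂ) ≠ 0 := by exact_mod_cast n.factorial_ne_zero
  rw [fourierCoeffOn_eq_integral]
  have key : ∀ t : ℝ, deriv (circleMap c r) t • ((1 / (circleMap c r t - c)^(n+1)) • f (circleMap c r t))
     = (Complex.I / r^n) * (fourier (-(n:ℤ)) (t : AddCircle (2 * Real.pi - 0)) • f (circleMap c r t)) := by
    intro t
    rw [fourier_coe_apply, deriv_circleMap]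
    have h1 : circleMap c r t - c = r * Complex.exp (t * Complex.I) := by simp [circleMap]
    have h2 : Complex.exp (2 * Real.pi * Complex.I * ((-(n:ℤ) : ℤ):ℂ) * t / ((2 * Real.pi - 0 : ℝ) : ℂ)) = (Complex.exp (t * Complex.I) ^ n)⁻¹ := by
      rw [← Complex.exp_nat_mul, ← Complex.exp_neg]
      congr 1
      push_cast
      field_simp
      ring
    rw [h1, h2]
    have : Complex.exp (t * Complex.I) ≠ 0 := Complex.exp_ne_zero _
    simp only [smul_eq_mul, circleMap, zero_add]
    field_simp
    ring
  rw [circleIntegral] at hC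
  simp_rw [key] at hC
  rw [intervalIntegral.integral_const_mul] at hC
  have hI : (Complex.I : ℂ) ≠ 0 := Complex.I_ne_zero
  rw [smul_eq_mul] at hC
  have : ∫ t in (0:ℝ)..(2 * Real.pi), (fourier (-(n:ℤ)) (t : AddCircle (2 * Real.pi - 0)) • f (circleMap c r t))
      = r^n / Complex.I * ((2 * Real.pi * Complex.I / n.factorial) * iteratedDeriv n f c) := by
    rw [← hC]; field_simp
  rw [this, Complex.real_smul]
  push_cast
  field_simp
  ring

lemma parseval (f : ℂ → ℂ) (c : ℂ) (r : ℝ) (hr : 0 < r) (hf : DifferentiableOn ℂ f (closedBall c r)) :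
    ∑' n : ℕ, ENNReal.ofReal (2 * Real.pi * r^(2*n)) *
        ENNReal.ofReal ((‖iteratedDeriv n f c‖ / n.factorial)^2) ≤
      ∫⁻ t in Ioo (-Real.pi) Real.pi, (‖f (circleMap c r t)‖₊ : ℝ≥0∞)^2 := by
  have h : (0:ℝ) < 2 * Real.pi := by positivity
  have hcont : Continuous fun t => f (circleMap c r t) :=
    hf.continuousOn.comp_continuous (continuous_circleMap c r)
      (fun t => circleMap_mem_closedBall c hr.le t)
  have hL2 : MemLp (fun t => f (circleMap c r t)) 2 (volume.restrict (Ioc 0 (2 * Real.pi))) := by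
    rw [memLp_two_iff_integrable_sq_norm hcont.aestronglyMeasurable]
    exact ((hcont.norm.pow 2).intervalIntegrable 0 (2 * Real.pi)).1
  have hs := hasSum_sq_fourierCoeffOn h hL2
  have hper : Function.Periodic (fun t => ‖f (circleMap c r t)‖^2) (2 * Real.pi) := by
    intro t; simp only; rw [periodic_circleMap c r t]
  have hI : ∫ t in (0:ℝ)..(2*Real.pi), ‖f (circleMap c r t)‖^2 = ∫ t in (-Real.pi)..Real.pi, ‖f (circleMap c r t)‖^2 := by
    have := hper.intervalIntegral_add_eq 0 (-Real.pi)
    rw [zero_add] at this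
    rw [this]; congr 1; ring
  have hR : ∫⁻ t in Ioo (-Real.pi) Real.pi, (‖f (circleMap c r t)‖₊ : ℝ≥0∞)^2
      = ENNReal.ofReal (∫ t in (0:ℝ)..(2*Real.pi), ‖f (circleMap c r t)‖^2) := by
    rw [hI, intervalIntegral.integral_of_le (by linarith), restrict_Ioo_eq_restrict_Ioc,
      ofReal_integral_eq_lintegral_ofReal]
    · refine lintegral_congr fun t => ?_
      rw [ENNReal.ofReal_pow (norm_nonneg _), ofReal_norm]; rfl
    · exact ((hcont.norm.pow 2).intervalIntegrable _ _).1
    · exact Filter.Eventually.of_forall fun t => by positivity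
  rw [hR]
  have hs2 := hs.summable.mul_left (2 * Real.pi)
  have hinj : Function.Injective (fun n : ℕ => (n : ℤ)) := Nat.cast_injective
  have hterm : ∀ n : ℕ, ENNReal.ofReal (2 * Real.pi * r^(2*n)) *
        ENNReal.ofReal ((‖iteratedDeriv n f c‖ / n.factorial)^2)
      = ENNReal.ofReal (2 * Real.pi * ‖fourierCoeffOn h (fun t => f (circleMap c r t)) (n:ℤ)‖^2) := by
    intro n
    rw [← ENNReal.ofReal_mul (by positivity), coeff f c r hr hf n h]
    congr 1
    simp only [norm_mul, norm_div, norm_pow, Complex.norm_real, Complex.norm_natCast, Real.norm_eq_abs, abs_of_pos hr]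
    rw [pow_mul']
    field_simp
  simp_rw [hterm]
  have hs3 : Summable fun n : ℕ => 2 * Real.pi * ‖fourierCoeffOn h (fun t => f (circleMap c r t)) (n:ℤ)‖^2 :=
    hs2.comp_injective hinj
  rw [← ENNReal.ofReal_tsum_of_nonneg (fun n => by positivity) hs3]
  apply ENNReal.ofReal_le_ofReal
  have hle := hs3.tsum_le_tsum_of_inj (g := fun i : ℤ => 2 * Real.pi * ‖fourierCoeffOn h (fun t => f (circleMap c r t)) i‖^2) _ hinj
     (fun _ _ => by positivity) (fun _ => le_rfl) hs2
  refine hle.trans (le_of_eq ?_)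
  rw [tsum_mul_left, hs.tsum_eq, sub_zero, smul_eq_mul]
  field_simp

lemma disc (f : ℂ → ℂ) (U : Set ℂ) (hU : IsOpen U) (x : ℝ) (hx : 0 < x) (hxU : ball (x:ℂ) (x / √2) ⊆ U)
    (hf : DifferentiableOn ℂ f U) (hm : Measurable (U.indicator f)) :
    ∑' n : ℕ, ENNReal.ofReal ((2 : ℝ) ^ n / (Nat.factorial (2 * n + 1) : ℝ)) *
      (ENNReal.ofReal (x ^ (2 * n + 1)) * (‖iteratedDeriv n f (x : ℂ)‖₊ : ℝ≥0∞) ^ 2) ≤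
    ∫⁻ z : ℂ, ENNReal.ofReal ((Real.pi * √(x^2-2*‖z - x‖^2))⁻¹) * (‖U.indicator f z‖₊ : ℝ≥0∞)^2 := by
  rw [polar_lintegral _ (by fun_prop) (x:ℂ)]
  have hsub : Ioo 0 (x/√2) ⊆ Ioi 0 := fun r hr => hr.1
  refine le_trans ?_ (lintegral_mono_set hsub)
  calc _ ≤ ∑' n : ℕ, ∫⁻ r in Ioo 0 (x / √2), ENNReal.ofReal r * (ENNReal.ofReal ((Real.pi * √(x^2-2*r^2))⁻¹) *
       ENNReal.ofReal (2 * Real.pi * r^(2*n))) * ENNReal.ofReal ((‖iteratedDeriv n f x‖ / n.factorial)^2) := by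
        refine ENNReal.tsum_le_tsum fun n => ?_
        rw [lintegral_mul_const _ (by fun_prop)]
        refine le_trans (le_of_eq ?_) (mul_le_mul_left (radial x hx n) _)
        rw [← ENNReal.ofReal_mul (by positivity), ← mul_assoc, ← ENNReal.ofReal_mul (by positivity)]
        have : (‖iteratedDeriv n f (x:ℂ)‖₊ : ℝ≥0∞) ^ 2 = ENNReal.ofReal (‖iteratedDeriv n f (x:ℂ)‖^2) := by
          rw [ENNReal.ofReal_pow (norm_nonneg _), ofReal_norm]; rfl
        rw [this, ← ENNReal.ofReal_mul (by positivity)]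
        congr 1
        have := n.factorial_ne_zero
        field_simp
    _ = ∫⁻ r in Ioo 0 (x / √2), ∑' n : ℕ, ENNReal.ofReal r * (ENNReal.ofReal ((Real.pi * √(x^2-2*r^2))⁻¹) *
       ENNReal.ofReal (2 * Real.pi * r^(2*n))) * ENNReal.ofReal ((‖iteratedDeriv n f x‖ / n.factorial)^2) := by
        rw [lintegral_tsum]
        intro n; fun_prop
    _ ≤ _ := by
        refine setLIntegral_mono' measurableSet_Ioo fun r hr => ?_
        simp_rw [mul_assoc]
        rw [ENNReal.tsum_mul_left, ENNReal.tsum_mul_left]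
        have hcl : closedBall (x:ℂ) r ⊆ U := (closedBall_subset_ball hr.2).trans hxU
        have hP := parseval f x r hr.1 (hf.mono hcl)
        simp_rw [mul_assoc] at hP
        have hmc : Measurable fun t => circleMap (x:ℂ) r t := (continuous_circleMap _ _).measurable
        have hn : ∀ t, ‖circleMap (x:ℂ) r t - x‖ = r := by
          intro t; simp [circleMap, abs_of_pos hr.1]
        simp_rw [hn]
        rw [lintegral_const_mul _ (by fun_prop)]
        gcongr
        refine hP.trans (le_of_eq ?_)
        refine lintegral_congr fun t => ?_
        rw [indicator_of_mem (hcl (circleMap_mem_closedBall _ hr.1.le t))]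

lemma omega_open : IsOpen Omega := by
  unfold Omega
  refine IsOpen.union ?_ ?_ <;>
  exact isOpen_biUnion fun _ _ => isOpen_ball

lemma half_aemeasurable (f : ℂ → ℂ) (hf : DifferentiableOn ℂ f Omega) (n : ℕ) :
    AEMeasurable (fun x : ℝ => ENNReal.ofReal (x ^ (2 * n + 1)) *
      (‖iteratedDeriv n f (x : ℂ)‖₊ : ℝ≥0∞) ^ 2) (volume.restrict (Ioo (0:ℝ) (1/2))) := by
  have hmem : ∀ x ∈ Ioo (0:ℝ) (1/2), ball (x:ℂ) (x / √2) ⊆ Omega := by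
    intro x hx z hz
    left
    exact mem_biUnion (⟨hx.1, hx.2.le⟩ : x ∈ Ioc (0:ℝ) (1/2)) hz
  have hcont : ∀ n, ContinuousOn (fun x : ℝ => iteratedDeriv n f (x:ℂ)) (Ioo (0:ℝ) (1/2)) := by
    intro n x hx
    have hxO : (x:ℂ) ∈ Omega := hmem x hx (mem_ball_self (div_pos hx.1 (by positivity)))
    have := (hf.analyticOnNhd omega_open).iterated_deriv n (x:ℂ) hxO
    rw [← iteratedDeriv_eq_iterate] at this
    exact (this.continuousAt.comp Complex.continuous_ofReal.continuousAt).continuousWithinAt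
  have hae : ∀ n : ℕ, AEMeasurable (fun x : ℝ => ENNReal.ofReal (x ^ (2 * n + 1)) *
            (‖iteratedDeriv n f (x : ℂ)‖₊ : ℝ≥0∞) ^ 2) (volume.restrict (Ioo (0:ℝ) (1/2))) := by
    intro n
    have := (hcont n).aemeasurable (μ := volume) measurableSet_Ioo
    fun_prop
  exact hae n

lemma half (f : ℂ → ℂ) (hf : DifferentiableOn ℂ f Omega) :
    (∑' n : ℕ, ENNReal.ofReal ((2 : ℝ) ^ n / (Nat.factorial (2 * n + 1) : ℝ)) *
        ∫⁻ x in Ioo (0 : ℝ) (1 / 2),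
          ENNReal.ofReal (x ^ (2 * n + 1)) *
            (‖iteratedDeriv n f (x : ℂ)‖₊ : ℝ≥0∞) ^ 2) ≤ 
    ∫⁻ z in Omega, (‖f z‖₊ : ℝ≥0∞) ^ 2 := by
  have hm : Measurable (Omega.indicator f) := by
    classical
    rw [← piecewise_eq_indicator]
    exact hf.continuousOn.measurable_piecewise continuousOn_const omega_open.measurableSet
  have hmem : ∀ x ∈ Ioo (0:ℝ) (1/2), ball (x:ℂ) (x / √2) ⊆ Omega := by
    intro x hx z hz
    left
    exact mem_biUnion (⟨hx.1, hx.2.le⟩ : x ∈ Ioc (0:ℝ) (1/2)) hz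
  have hae := half_aemeasurable f hf
  calc _ = ∫⁻ x in Ioo (0:ℝ) (1/2), ∑' n : ℕ, ENNReal.ofReal ((2 : ℝ) ^ n / (Nat.factorial (2 * n + 1) : ℝ)) *
      (ENNReal.ofReal (x ^ (2 * n + 1)) * (‖iteratedDeriv n f (x : ℂ)‖₊ : ℝ≥0∞) ^ 2) := by
        rw [lintegral_tsum (fun n => (hae n).const_mul _)]
        congr 1; ext n
        rw [lintegral_const_mul'' _ (hae n)]
    _ ≤ ∫⁻ x in Ioo (0:ℝ) (1/2), ∫⁻ z : ℂ, ENNReal.ofReal ((Real.pi * √(x^2-2*‖z - x‖^2))⁻¹) * (‖Omega.indicator f z‖₊ : ℝ≥0∞)^2 :=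
        setLIntegral_mono' measurableSet_Ioo fun x hx =>
          disc f Omega omega_open x hx.1 (hmem x hx) hf hm
    _ = ∫⁻ z : ℂ, ∫⁻ x in Ioo (0:ℝ) (1/2), ENNReal.ofReal ((Real.pi * √(x^2-2*‖z - x‖^2))⁻¹) * (‖Omega.indicator f z‖₊ : ℝ≥0∞)^2 := by
        apply lintegral_lintegral_swap
        apply Measurable.aemeasurable
        unfold Function.uncurry
        fun_prop
    _ ≤ ∫⁻ z, (‖Omega.indicator f z‖₊ : ℝ≥0∞)^2 := by
        refine lintegral_mono fun z => ?_
        simp only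
        rw [lintegral_mul_const _ (by fun_prop)]
        exact mul_le_of_le_one_left' (xint z)
    _ = _ := by
        rw [← lintegral_indicator omega_open.measurableSet]
        refine lintegral_congr fun z => ?_
        by_cases hz : z ∈ Omega <;> simp [hz]

lemma omega_symm (z : ℂ) (hz : z ∈ Omega) : 1 - z ∈ Omega := by
  have hd : ∀ x : ℝ, dist (1 - z) ((1 - x : ℝ) : ℂ) = dist z x := by
    intro x
    rw [dist_eq_norm, dist_eq_norm, ← norm_neg]
    congr 1; push_cast; ring
  unfold Omega at hz ⊢
  simp only [mem_union, mem_iUnion, mem_ball, exists_prop] at hz ⊢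
  rcases hz with ⟨x, hx, h⟩ | ⟨x, hx, h⟩
  · rcases eq_or_lt_of_le hx.2 with he | hl
    · left
      refine ⟨1 - x, ⟨by linarith [hx.2], by linarith⟩, ?_⟩
      rw [hd]; convert h using 2; linarith
    · right
      refine ⟨1 - x, ⟨by linarith, by linarith [hx.1]⟩, ?_⟩
      rw [hd]; convert h using 2; ring
  · left
    exact ⟨1 - x, ⟨by linarith [hx.2], by linarith [hx.1]⟩, by rw [hd]; exact h⟩

lemma abs_bound (u v x : ℝ) (hx : 0 < x) (h : √(u^2+v^2) < x / √2) : |u| + |v| < x := by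
  rw [Real.sqrt_lt' (by positivity), div_pow, Real.sq_sqrt (by norm_num)] at h
  apply lt_of_pow_lt_pow_left₀ 2 hx.le
  nlinarith [sq_nonneg (|u| - |v|), sq_abs u, sq_abs v]

lemma omega_sub : Omega ⊆ SquareD := by
  intro z hz
  unfold Omega at hz
  simp only [mem_union, mem_iUnion, mem_ball, exists_prop] at hz
  have hd : ∀ x : ℝ, dist z x = √((z.re - x)^2 + z.im^2) := by
    intro x
    rw [Complex.dist_eq_re_im]; simp
  simp only [hd] at hz
  unfold SquareD
  simp only [mem_ofPred_eq, lt_min_iff]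
  rcases hz with ⟨x, hx, h⟩ | ⟨x, hx, h⟩
  · have := abs_bound _ _ _ hx.1 h
    have := hx.2
    have h1 := abs_le.1 (le_refl |z.re - x|)
    have h2 := abs_nonneg z.im
    refine ⟨?_, ?_, ?_, ?_⟩ <;> linarith
  · have := abs_bound _ _ _ (by linarith [hx.2]) h
    have := hx.1
    have h1 := abs_le.1 (le_refl |z.re - x|)
    have h2 := abs_nonneg z.im
    refine ⟨?_, ?_, ?_, ?_⟩ <;> linarith

lemma half' (f : ℂ → ℂ) (hf : DifferentiableOn ℂ f Omega) :
    (∑' n : ℕ, ENNReal.ofReal ((2 : ℝ) ^ n / (Nat.factorial (2 * n + 1) : ℝ)) *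
        ∫⁻ x in Ioo (0 : ℝ) (1 / 2),
          ENNReal.ofReal (x ^ (2 * n + 1)) *
            (‖iteratedDeriv n f (1 - (x : ℂ))‖₊ : ℝ≥0∞) ^ 2) ≤ 
    ∫⁻ z in Omega, (‖f z‖₊ : ℝ≥0∞) ^ 2 := by
  have hg : DifferentiableOn ℂ (fun z => f (1 - z)) Omega :=
    hf.comp (by fun_prop) (fun z hz => omega_symm z hz)
  have := half _ hg
  simp only [iteratedDeriv_comp_const_sub, nnnorm_smul, nnnorm_pow, nnnorm_neg, nnnorm_one, one_pow, one_mul] at this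
  refine this.trans (le_of_eq ?_)
  rw [← lintegral_indicator omega_open.measurableSet, ← lintegral_indicator omega_open.measurableSet,
    ← lintegral_sub_left_eq_self _ (1:ℂ)]
  refine lintegral_congr fun z => ?_
  by_cases hz : z ∈ Omega
  · simp [hz, omega_symm z hz]
  · have : 1 - z ∉ Omega := fun h => hz (by simpa using omega_symm _ h)
    simp [hz, this]

/-- The (AHS)-type sum over the diagonal `(0,1)` is bounded by twice the Bergman integral on
`Ω`, and in particular by twice the Bergman integral on the square `D ⊇ Ω`. -/
theorem ahs_upper_bound (f : ℂ → ℂ) (hf : DifferentiableOn ℂ f Omega) :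
    (∑' n : ℕ, ENNReal.ofReal ((2 : ℝ) ^ n / (Nat.factorial (2 * n + 1) : ℝ)) *
        ∫⁻ x in Ioo (0 : ℝ) (1 / 2),
          ENNReal.ofReal (x ^ (2 * n + 1)) *
            ((‖iteratedDeriv n f (x : ℂ)‖₊ : ℝ≥0∞) ^ 2 +
              (‖iteratedDeriv n f (1 - (x : ℂ))‖₊ : ℝ≥0∞) ^ 2) ∂volume) ≤
        2 * ∫⁻ z in Omega, (‖f z‖₊ : ℝ≥0∞) ^ 2 ∂volume ∧
      (2 * ∫⁻ z in Omega, (‖f z‖₊ : ℝ≥0∞) ^ 2 ∂volume) ≤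
        2 * ∫⁻ z in SquareD, (‖f z‖₊ : ℝ≥0∞) ^ 2 ∂volume := by
  refine ⟨?_, ?_⟩
  · have hsplit : ∀ n : ℕ, ∫⁻ x in Ioo (0 : ℝ) (1 / 2),
          ENNReal.ofReal (x ^ (2 * n + 1)) *
            ((‖iteratedDeriv n f (x : ℂ)‖₊ : ℝ≥0∞) ^ 2 +
              (‖iteratedDeriv n f (1 - (x : ℂ))‖₊ : ℝ≥0∞) ^ 2) ∂volume
        = (∫⁻ x in Ioo (0 : ℝ) (1 / 2), ENNReal.ofReal (x ^ (2 * n + 1)) *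
            (‖iteratedDeriv n f (x : ℂ)‖₊ : ℝ≥0∞) ^ 2) +
          ∫⁻ x in Ioo (0 : ℝ) (1 / 2), ENNReal.ofReal (x ^ (2 * n + 1)) *
            (‖iteratedDeriv n f (1 - (x : ℂ))‖₊ : ℝ≥0∞) ^ 2 := by
      intro n
      simp_rw [mul_add]
      exact lintegral_add_left' (half_aemeasurable f hf n) _
    simp_rw [hsplit, mul_add]
    rw [ENNReal.tsum_add, two_mul]
    exact add_le_add (half f hf) (half' f hf)
  · gcongr
    exact omega_sub
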